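/- Let τ be a tour of (G_∞, w') and let τ* be the tour of G defined from τ as in the proof of the 3-swap lemma. Suppose there exist a non-edge ṽv' in τ and a G-edge uṽ that is in τ* but not in τ, and suppose that every vertex v'' ∉ {u, ṽ} that is not τ*-consistent satisfies φ(v'') < φ(ṽ). Then there exists an improving 3-swap for τ that removes the non-edge ṽv'. -/

import Mathlib

/-!
Statement 19 (Claim `3_swap_from_infty`): let `τ` be a tour of `(G_∞, w')` and `τ*`
the tour of `G` defined from `τ` as in the proof of Lemma `swap_from_infty`. If there
are a non-edge `ṽv'` in `τ` and a `G`-edge `uṽ` in `τ*` but not in `τ`, and every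
vertex `v'' ∉ {u, ṽ}` that is not `τ*`-consistent has priority `φ v'' < φ ṽ`, then
there is an improving 3-swap for `τ` that removes the non-edge `ṽv'`.

Here `G` is the graph produced by the PLS reduction, given as a `PLSReductionGraph`
recording its structural facts; `G_∞` is the complete graph on the vertices of `G` and
`w'` extends `w` by giving each non-edge `vv'` the weight `M · 3 ^ max (φ v) (φ v')`.
A vertex is `τ*`-consistent if its incident edges in `τ` coincide with its incident
edges in `τ*`. For the claim, the relevant properties of `τ*` are that it is a tour of
`G_∞` containing only `G`-edges.
-/
open Finset

section TSP

variable {V : Type*} [Fintype V] [DecidableEq V]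

/-- A tour of the complete graph on `V`: a permutation forming one cycle through all
vertices. -/
def IsTour (σ : Equiv.Perm V) : Prop :=
  σ.IsCycle ∧ σ.support = Finset.univ

/-- The set of edges used by a tour. -/
def tourEdges (σ : Equiv.Perm V) : Finset (Sym2 V) :=
  Finset.univ.image fun v => s(v, σ v)

/-- The total weight of a tour. -/
def tourWeight (w : Sym2 V → ℝ) (σ : Equiv.Perm V) : ℝ :=
  ∑ e ∈ tourEdges σ, w e

/-- A `k`-swap: replace at most `k` edges of the tour so that again a tour results. -/
def IsKSwap (k : ℕ) (σ σ' : Equiv.Perm V) : Prop :=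
  IsTour σ' ∧ (tourEdges σ \ tourEdges σ').card ≤ k

/-- An improving `k`-swap strictly decreases the total tour weight. -/
def ImprovingKSwap (w : Sym2 V → ℝ) (k : ℕ) (σ σ' : Equiv.Perm V) : Prop :=
  IsKSwap k σ σ' ∧ tourWeight w σ' < tourWeight w σ

/-- A k-Opt locally optimal tour: no improving `k`-swap exists. -/
def IsLocalOpt (w : Sym2 V → ℝ) (k : ℕ) (σ : Equiv.Perm V) : Prop :=
  ∀ σ', ¬ ImprovingKSwap w k σ σ'

end TSP

/-- The degree of a vertex in a (not necessarily decidable) graph. -/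
noncomputable def gdeg {V : Type*} (G : SimpleGraph V) (v : V) : ℕ :=
  (G.neighborSet v).ncard

/-- The graph `G` produced by the PLS reduction, together with its weights, the
priority assignment `φ` and the maximal edge weight `M`; the fields record the
structural facts of the construction used in Section 7:
all degrees are two, three or four, every vertex is a degree-two vertex or adjacent
to one, the priorities are the values `N, …, 1` assigned first to the degree-two
vertices, and `M` bounds all edge weights. -/
structure PLSReductionGraph (V : Type*) [Fintype V] [DecidableEq V] where
  G : SimpleGraph V
  w : Sym2 V → ℝ
  w_nonneg : ∀ e, 0 ≤ w e
  φ : V → ℕ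
  φ_inj : Function.Injective φ
  φ_pos : ∀ v, 1 ≤ φ v
  φ_le : ∀ v, φ v ≤ Fintype.card V
  deg234 : ∀ v, gdeg G v = 2 ∨ gdeg G v = 3 ∨ gdeg G v = 4
  near_deg_two : ∀ v, gdeg G v = 2 ∨ ∃ u, G.Adj v u ∧ gdeg G u = 2
  deg_two_top : ∀ v u, gdeg G v = 2 → gdeg G u ≠ 2 → φ u < φ v
  M : ℝ
  M_pos : 0 < M
  M_max : ∀ e ∈ G.edgeSet, w e ≤ M

open scoped Classical in
/-- The extension `w'` of the weights `w` of `G` to the complete graph `G_∞`: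
a non-edge `vv'` gets the weight `M · 3 ^ max (φ v) (φ v')`. -/
noncomputable def extendW {V : Type*} (G : SimpleGraph V) (w : Sym2 V → ℝ)
    (φ : V → ℕ) (M : ℝ) (e : Sym2 V) : ℝ :=
  if e ∈ G.edgeSet then w e
  else M * 3 ^ (Sym2.lift ⟨fun a b => max (φ a) (φ b), fun a b => max_comm _ _⟩ e)

/-- `v` is `τ*`-consistent: its incident tour edges in `τ` and in `τstar` agree. -/
def ConsistentAt {V : Type*} [Fintype V] [DecidableEq V]
    (τ τstar : Equiv.Perm V) (v : V) : Prop :=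
  {e ∈ tourEdges τ | v ∈ e} = {e ∈ tourEdges τstar | v ∈ e}

/-!
Write `a` for `ṽ` and direct both tours so that `v' = τ a` and `u = τ* a`. Numbering the vertices
along `τ` as `x₀ = a, x₁ = v', …`, let `u = x_{p+1}`. Exchanges are built around inserting the
`G`-edge `au` or the other `τ*`-edge at `a`. Such an exchange improves `τ` if it removes the
non-edge `av'` and every further edge it inserts is a `G`-edge or joins two vertices of priority
below `φ a`: a `G`-edge weighs at most `M < M · 3 ^ φ a / 3`, the others at most `M · 3 ^ φ a / 3`.
Every end other than `u` and `a` of an edge on which the tours differ has such a priority, and this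
holds for `v'`.

If `x_{p+1}x_{p+2}` is not in `τ*`, reversing the segment from `v'` to `u` improves `τ`. Otherwise
`x_p x_{p+1}` is not in `τ*`, and an edge of `τ` beyond `x_{p+2}` not in `τ*` allows a
segment exchange; since `τ*` has no subtour, there is one, possibly only the last edge, back to `a`.
In that last case the second neighbour of `a` in `τ*` is some `x_{q+1}` of low priority, and the
same reversal with `q` in place of `p` (a segment exchange if `q + 1 = p`) leaves only the case that
`q < p` and `x_q x_{q+1}` is not in `τ*`. If `φ u < φ a`, exchanging the segments between `a`, `x_q`
and `x_p` improves `τ`. If `φ u > φ a`, then the removed edge `x_p u` is itself a non-edge of weight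
at least `3 · M · 3 ^ φ a`, which pays for the edge from `x_p` to `a`.
-/

section NthEdge

variable {V : Type*}

/-- The `k`-th edge met when following the tour `σ` from the vertex `a`, counting from zero. -/
def nthEdge (σ : Equiv.Perm V) (a : V) (k : ℕ) : Sym2 V :=
  s((σ ^ k) a, (σ ^ (k + 1)) a)

lemma nthEdge_eq (σ : Equiv.Perm V) (a : V) (k : ℕ) :
    nthEdge σ a k = s((σ ^ k) a, σ ((σ ^ k) a)) := by
  rw [nthEdge, pow_succ', Equiv.Perm.mul_apply]

end NthEdge

section Tour

variable {V : Type*} [Fintype V] [DecidableEq V] {σ τ : Equiv.Perm V} {a b c d : V}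

lemma mk_mem_tourEdges : s(a, b) ∈ tourEdges σ ↔ σ a = b ∨ σ b = a := by
  simp only [tourEdges, mem_image, mem_univ, true_and, Sym2.eq_iff]
  grind

lemma mk_apply_mem_tourEdges (σ : Equiv.Perm V) (a : V) : s(a, σ a) ∈ tourEdges σ :=
  mk_mem_tourEdges.2 (.inl rfl)

lemma tourEdges_inv (σ : Equiv.Perm V) : tourEdges σ⁻¹ = tourEdges σ := by
  ext e
  induction e using Sym2.ind with
  | _ =>
    simp only [mk_mem_tourEdges, Equiv.Perm.inv_eq_iff_eq]
    grind

lemma eq_or_eq_of_mem_tourEdges (hb : s(a, b) ∈ tourEdges σ) (hc : s(a, c) ∈ tourEdges σ)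
    (hd : s(a, d) ∈ tourEdges σ) (hbc : b ≠ c) : d = b ∨ d = c := by
  have eq_inv {x : V} (hx : σ x = a) : x = σ⁻¹ a := Equiv.Perm.eq_inv_iff_eq.2 hx
  rw [mk_mem_tourEdges] at hb hc hd
  grind

namespace IsTour

lemma inv (hσ : IsTour σ) : IsTour σ⁻¹ :=
  ⟨hσ.1.inv, by rw [Equiv.Perm.support_inv, hσ.2]⟩

lemma apply_ne (hσ : IsTour σ) (a : V) : σ a ≠ a :=
  Equiv.Perm.mem_support.1 (hσ.2 ▸ mem_univ a)

lemma isCycleOn (hσ : IsTour σ) : σ.IsCycleOn (univ : Finset V) := by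
  simpa [hσ.apply_ne] using hσ.1.isCycleOn

lemma pow_apply_inj (hσ : IsTour σ) {k m : ℕ} (hk : k < Fintype.card V)
    (hm : m < Fintype.card V) : (σ ^ k) a = (σ ^ m) a ↔ k = m := by
  refine ⟨fun h ↦ ?_, by rintro rfl; rfl⟩
  have := (hσ.isCycleOn.pow_apply_eq_pow_apply (mem_univ a)).1 h
  exact Nat.ModEq.eq_of_lt_of_lt (by rwa [card_univ] at this) hk hm

lemma pow_card_apply (hσ : IsTour σ) (a : V) : (σ ^ Fintype.card V) a = a :=
  hσ.isCycleOn.pow_card_apply (mem_univ a)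

lemma pow_apply_ne_self (hσ : IsTour σ) {k : ℕ} (hk : 0 < k) (hkn : k < Fintype.card V) :
    (σ ^ k) a ≠ a := fun h ↦
  hk.ne' ((hσ.pow_apply_inj hkn (by lia)).1 (h.trans (by simp)))

lemma exists_pow_apply_eq (hσ : IsTour σ) (a b : V) : ∃ k < Fintype.card V, (σ ^ k) a = b :=
  hσ.isCycleOn.exists_pow_eq (mem_univ a) (mem_univ b)

lemma apply_apply_ne (hσ : IsTour σ) (hV : 3 ≤ Fintype.card V) (a : V) : σ (σ a) ≠ a :=
  hσ.pow_apply_ne_self (k := 2) (by lia) (by lia)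

lemma mk_apply_injective (hσ : IsTour σ) (hV : 3 ≤ Fintype.card V) :
    Function.Injective fun a ↦ s(a, σ a) := by
  intro a b hab
  have := hσ.apply_apply_ne hV b
  grind

lemma card_tourEdges (hσ : IsTour σ) (hV : 3 ≤ Fintype.card V) :
    #(tourEdges σ) = Fintype.card V :=
  card_image_of_injective _ (hσ.mk_apply_injective hV)

lemma exists_apply_eq_of_mem_tourEdges (hσ : IsTour σ) (hab : s(a, b) ∈ tourEdges σ) :
    ∃ τ, IsTour τ ∧ tourEdges τ = tourEdges σ ∧ τ a = b := by
  rcases mk_mem_tourEdges.1 hab with h | h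
  · exact ⟨σ, hσ, rfl, h⟩
  · exact ⟨σ⁻¹, hσ.inv, tourEdges_inv σ, Equiv.Perm.inv_eq_iff_eq.2 h.symm⟩

end IsTour

lemma nthEdge_mem_tourEdges (σ : Equiv.Perm V) (a : V) (k : ℕ) : nthEdge σ a k ∈ tourEdges σ :=
  nthEdge_eq σ a k ▸ mk_apply_mem_tourEdges σ _

lemma IsTour.nthEdge_inj (hσ : IsTour σ) (hV : 3 ≤ Fintype.card V) {k m : ℕ}
    (hk : k < Fintype.card V) (hm : m < Fintype.card V) :
    nthEdge σ a k = nthEdge σ a m ↔ k = m := by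
  rw [nthEdge_eq, nthEdge_eq, (hσ.mk_apply_injective hV).eq_iff, hσ.pow_apply_inj hk hm]

lemma IsTour.nthEdge_last (hσ : IsTour σ) {l : ℕ} (hl : l + 1 = Fintype.card V) :
    nthEdge σ a l = s((σ ^ l) a, a) := by
  rw [nthEdge, hl, hσ.pow_card_apply]

lemma IsTour.exists_pow_succ_apply_eq_of_notMem (hσ : IsTour σ) (hab : b ≠ a)
    (h : s(a, b) ∉ tourEdges σ) :
    ∃ p, 1 ≤ p ∧ p + 2 < Fintype.card V ∧ (σ ^ (p + 1)) a = b := by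
  obtain ⟨k, hk, rfl⟩ := hσ.exists_pow_apply_eq a b
  have hk0 : k ≠ 0 := by rintro rfl; exact hab rfl
  have hk1 : k ≠ 1 := by rintro rfl; exact h (nthEdge_mem_tourEdges σ a 0)
  have hkn : k + 1 ≠ Fintype.card V := fun hkn ↦ by
    have hlast := nthEdge_mem_tourEdges σ a k
    rw [hσ.nthEdge_last hkn, Sym2.eq_swap] at hlast
    exact h hlast
  exact ⟨k - 1, by lia, by lia, by rw [Nat.sub_add_cancel (by lia)]⟩

lemma IsTour.nthEdge_notMem_of_chord (hτ : IsTour τ) {k : ℕ} (hk : 1 ≤ k)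
    (hkn : k + 2 < Fintype.card V) (hchord : s(a, (τ ^ (k + 1)) a) ∈ tourEdges σ)
    (hnext : nthEdge τ a (k + 1) ∈ tourEdges σ) : nthEdge τ a k ∉ tourEdges σ := by
  intro hprev
  rw [nthEdge, Sym2.eq_swap] at hprev
  rw [Sym2.eq_swap] at hchord
  rcases eq_or_eq_of_mem_tourEdges hchord hnext hprev
    (hτ.pow_apply_ne_self (by lia) (by lia)).symm with h | h
  · exact hτ.pow_apply_ne_self (by lia) (by lia) h
  · have := (hτ.pow_apply_inj (by lia) (by lia)).1 h
    lia

lemma IsTour.pow_succ_apply_eq_of_nthEdge_mem (hτ : IsTour τ) {i : ℕ}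
    (hσ : σ a = (τ ^ i) a) (r : ℕ) (hr : i + r < Fintype.card V)
    (hmem : ∀ k, i ≤ k → k < i + r → nthEdge τ a k ∈ tourEdges σ) :
    (σ ^ (r + 1)) a = (τ ^ (i + r)) a := by
  induction r using Nat.strong_induction_on with
  | _ r ih =>
    match r with
    | 0 => simpa using hσ
    | r + 1 =>
      have hr_eq := ih r (by lia) (by lia) fun k hik hk ↦ hmem k hik (by lia)
      rw [pow_succ', Equiv.Perm.mul_apply, hr_eq]
      refine (mk_mem_tourEdges.1 (hmem (i + r) (by lia) (by lia))).resolve_right fun hback ↦ ?_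
      have hback' : (τ ^ (i + (r + 1))) a = (σ ^ r) a := by
        rw [← hr_eq, pow_succ' σ, Equiv.Perm.mul_apply] at hback
        exact σ.injective hback
      match r with
      | 0 => exact hτ.pow_apply_ne_self (by lia) hr hback'
      | r + 1 =>
        rw [ih r (by lia) (by lia) fun k hik hk ↦ hmem k hik (by lia),
          hτ.pow_apply_inj hr (by lia)] at hback'
        lia

/-- Otherwise the chord from `a` to position `i` and the tour edges behind it would close up
to a proper subtour. -/
lemma IsTour.exists_nthEdge_notMem_of_chord (hτ : IsTour τ) (hσ : IsTour σ) {i : ℕ} (hi : 2 ≤ i)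
    (hin : i + 1 < Fintype.card V) (hchord : σ a = (τ ^ i) a) :
    ∃ k, i ≤ k ∧ k < Fintype.card V ∧ nthEdge τ a k ∉ tourEdges σ := by
  by_contra! hmem
  obtain ⟨r, hr⟩ : ∃ r, i + r + 1 = Fintype.card V := ⟨Fintype.card V - 1 - i, by lia⟩
  have hlast := hτ.pow_succ_apply_eq_of_nthEdge_mem hchord r (by lia)
    fun k hik hk ↦ hmem k hik (by lia)
  have hclose := hmem (i + r) (by lia) (by lia)
  rw [hτ.nthEdge_last hr, mk_mem_tourEdges, hchord,
    hτ.pow_apply_inj (by lia) (by lia)] at hclose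
  rcases hclose with h | h
  · rw [← hlast, ← Equiv.Perm.mul_apply, ← pow_succ'] at h
    exact hσ.pow_apply_ne_self (by lia) (by lia) h
  · lia

end Tour

section Exchange

lemma isChain_range'_of_forall {R : ℕ → ℕ → Prop} (s len : ℕ)
    (h : ∀ k, s ≤ k → k + 1 < s + len → R k (k + 1)) : (List.range' s len).IsChain R := by
  rw [List.isChain_iff_getElem]
  intro i hi
  simp only [List.length_range', List.getElem_range', one_mul] at hi ⊢
  exact h (s + i) (by lia) (by lia)

lemma perm_range_of_reversal (m r : ℕ) :
    (0 :: ((List.range' 1 m).reverse ++ List.range' (m + 1) r)).Perm (List.range (m + 1 + r)) := by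
  rw [List.range_eq_range', show m + 1 + r = m + r + 1 by ring, List.range'_succ,
    ← List.range'_append_1, zero_add, add_comm 1 m]
  exact ((List.reverse_perm _).append_right _).cons 0

lemma perm_range_of_segment_exchange (p q r : ℕ) :
    (0 :: (List.range' (p + 1) q ++ List.range' 1 p ++ List.range' (p + q + 1) r)).Perm
      (List.range (p + q + 1 + r)) := by
  rw [List.range_eq_range', show p + q + 1 + r = p + q + r + 1 by ring, List.range'_succ,
    ← List.range'_append_1, ← List.range'_append_1, zero_add, add_comm 1 p, add_comm 1 (p + q)]
  exact (List.perm_append_comm.append_right _).cons 0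

lemma isChain_reversal {R : ℕ → ℕ → Prop} {m : ℕ} (r : ℕ) (hm : 1 ≤ m) (h_first : R 0 m)
    (h_back : ∀ k, 1 ≤ k → k < m → R (k + 1) k) (h_join : R 1 (m + 1))
    (h_tail : ∀ k, m < k → k < m + 1 + r → R k (k + 1)) :
    (0 :: ((List.range' 1 m).reverse ++ List.range' (m + 1) r ++ [m + 1 + r])).IsChain R := by
  rw [List.append_assoc, ← List.range'_1_concat, List.isChain_cons, List.isChain_append,
    List.isChain_reverse]
  refine ⟨?_, isChain_range'_of_forall _ _ fun k hk hkm ↦ h_back k hk (by lia),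
    isChain_range'_of_forall _ _ fun k hk hkr ↦ h_tail k hk (by lia), ?_⟩
  · simpa [show m ≠ 0 by lia, List.getLast?_range'] using h_first
  · simpa [show m ≠ 0 by lia, List.head?_range'] using h_join

lemma isChain_segment_exchange {R : ℕ → ℕ → Prop} {p q : ℕ} (r : ℕ) (hp : 1 ≤ p) (hq : 1 ≤ q)
    (h_first : R 0 (p + 1)) (h_middle : R (p + q) 1) (h_last : R p (p + q + 1))
    (h_next : ∀ k, 1 ≤ k → k ≠ p → k ≠ p + q → k < p + q + 1 + r → R k (k + 1)) :
    (0 :: (List.range' (p + 1) q ++ List.range' 1 p ++ List.range' (p + q + 1) r ++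
      [p + q + 1 + r])).IsChain R := by
  rw [List.append_assoc, ← List.range'_1_concat, List.isChain_cons, List.isChain_append,
    List.isChain_append]
  have hsegment (s len : ℕ) (hs : 1 ≤ s) (hlen : s + len ≤ p + q + r + 2)
      (hp' : p < s ∨ s + len ≤ p + 1) (hq' : p + q < s ∨ s + len ≤ p + q + 1) :
      (List.range' s len).IsChain R :=
    isChain_range'_of_forall s len fun k hk hks ↦
      h_next k (by lia) (by lia) (by lia) (by lia)
  refine ⟨?_, ⟨hsegment (p + 1) q ?_ ?_ ?_ ?_, hsegment 1 p ?_ ?_ ?_ ?_, ?_⟩,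
    hsegment (p + q + 1) (r + 1) ?_ ?_ ?_ ?_, ?_⟩
  any_goals lia
  · simpa [show p ≠ 0 by lia, show q ≠ 0 by lia, List.head?_range'] using h_first
  · simpa [show p ≠ 0 by lia, show q ≠ 0 by lia, List.getLast?_range',
      List.head?_range'] using h_middle
  · simpa [show p ≠ 0 by lia, List.getLast?_range', List.head?_range'] using h_last

variable {V : Type*} [Fintype V] [DecidableEq V] {τ : Equiv.Perm V} {a : V}

lemma exists_isTour_of_isChain {R : V → V → Prop} {b : V} {l : List V} (hnodup : (b :: l).Nodup)
    (hmem : ∀ v, v ∈ b :: l) (hl : l ≠ []) (hchain : (b :: (l ++ [b])).IsChain R) :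
    ∃ σ, IsTour σ ∧ ∀ v, R v (σ v) := by
  have hlen : 2 ≤ (b :: l).length := by
    simpa [Nat.one_le_iff_ne_zero] using hl
  refine ⟨(b :: l).formPerm, ⟨List.isCycle_formPerm hnodup hlen, ?_⟩, fun v ↦ ?_⟩
  · rw [List.support_formPerm_of_nodup _ hnodup (by simpa using hl)]
    exact eq_univ_of_forall fun v ↦ List.mem_toFinset.2 (hmem v)
  · obtain ⟨i, hi, rfl⟩ := List.mem_iff_getElem.1 (hmem v)
    have hstep := hchain.getElem i (by simpa using hi)
    rw [List.formPerm_apply_getElem _ hnodup]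
    simp only [← List.cons_append, List.getElem_append] at hstep
    grind [Nat.mod_eq_of_lt, Nat.mod_self]

/-- `0 :: L` is the order in which the new tour visits the positions along `τ`; the last position
is position `0` again. -/
lemma IsTour.exists_of_perm_range (hτ : IsTour τ) (hV : 2 ≤ Fintype.card V) {S : Finset (Sym2 V)}
    {L : List ℕ} (hL : (0 :: L).Perm (List.range (Fintype.card V)))
    (hchain : (0 :: (L ++ [Fintype.card V])).IsChain fun k m ↦ s((τ ^ k) a, (τ ^ m) a) ∈ S) :
    ∃ τ₂, IsTour τ₂ ∧ tourEdges τ₂ ⊆ S := by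
  have hnodup : ((0 :: L).map fun k ↦ (τ ^ k) a).Nodup := by
    refine (List.nodup_map_iff_inj_on (hL.nodup_iff.2 List.nodup_range)).2 fun k hk m hm h ↦ ?_
    rw [hL.mem_iff, List.mem_range] at hk hm
    exact (hτ.pow_apply_inj hk hm).1 h
  have hmem (v : V) : v ∈ (0 :: L).map fun k ↦ (τ ^ k) a := by
    obtain ⟨k, hk, rfl⟩ := hτ.exists_pow_apply_eq a v
    exact List.mem_map_of_mem (hL.mem_iff.2 (List.mem_range.2 hk))
  have hlen : L.length + 1 = Fintype.card V := by simpa using hL.length_eq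
  have hchain' := (List.isChain_map (R := fun b c ↦ s(b, c) ∈ S) fun k ↦ (τ ^ k) a).2 hchain
  simp only [List.map_cons, List.map_append, List.map_nil, hτ.pow_card_apply, pow_zero,
    Equiv.Perm.one_apply] at hnodup hmem hchain'
  obtain ⟨τ₂, hτ₂, hS⟩ := exists_isTour_of_isChain hnodup hmem
    (List.ne_nil_of_length_pos (by rw [List.length_map]; lia)) hchain'
  exact ⟨τ₂, hτ₂, by simpa [tourEdges, image_subset_iff] using hS⟩

lemma IsTour.exists_reversal (hτ : IsTour τ) (a : V) {m : ℕ} (hm : 1 ≤ m)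
    (hmn : m + 1 < Fintype.card V) :
    ∃ τ₂, IsTour τ₂ ∧ tourEdges τ₂ ⊆ tourEdges τ \ {nthEdge τ a 0, nthEdge τ a m} ∪
      {s(a, (τ ^ m) a), s(τ a, (τ ^ (m + 1)) a)} := by
  have hkeep (k : ℕ) (h0 : k ≠ 0) (hkm : k ≠ m) (hk : k < Fintype.card V) :
      nthEdge τ a k ∈ tourEdges τ \ {nthEdge τ a 0, nthEdge τ a m} := by
    have hinj {i : ℕ} := hτ.nthEdge_inj (a := a) (k := k) (m := i) (by lia) hk
    simp [nthEdge_mem_tourEdges, hinj (show 0 < _ by lia), hinj (show m < _ by lia), h0, hkm]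
  obtain ⟨r, hr⟩ : ∃ r, m + 1 + r = Fintype.card V := ⟨_, Nat.add_sub_of_le hmn.le⟩
  refine hτ.exists_of_perm_range (a := a) (by lia)
    (L := (List.range' 1 m).reverse ++ List.range' (m + 1) r) (hr ▸ perm_range_of_reversal m r) ?_
  rw [← hr]
  refine isChain_reversal r hm (by simp) (fun k hk hkm ↦ ?_) (by simp) fun k hk hkr ↦ ?_
  · rw [show s((τ ^ (k + 1)) a, (τ ^ k) a) = nthEdge τ a k from Sym2.eq_swap]
    exact mem_union_left _ (hkeep k (by lia) (by lia) (by lia))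
  · exact mem_union_left _ (hkeep k (by lia) (by lia) (by lia))

lemma IsTour.exists_segment_exchange (hτ : IsTour τ) (a : V) {p j : ℕ} (hp : 1 ≤ p)
    (hpj : p < j) (hj : j < Fintype.card V) :
    ∃ τ₂, IsTour τ₂ ∧ tourEdges τ₂ ⊆
      tourEdges τ \ {nthEdge τ a 0, nthEdge τ a p, nthEdge τ a j} ∪
        {s(a, (τ ^ (p + 1)) a), s((τ ^ j) a, τ a), s((τ ^ p) a, (τ ^ (j + 1)) a)} := by
  have hkeep (k : ℕ) (h0 : k ≠ 0) (hkp : k ≠ p) (hkj : k ≠ j) (hk : k < Fintype.card V) :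
      nthEdge τ a k ∈ tourEdges τ \ {nthEdge τ a 0, nthEdge τ a p, nthEdge τ a j} := by
    have hinj {i : ℕ} := hτ.nthEdge_inj (a := a) (k := k) (m := i) (by lia) hk
    simp [nthEdge_mem_tourEdges, hinj (show 0 < _ by lia), hinj (show p < _ by lia), hinj hj, *]
  obtain ⟨q, rfl⟩ := Nat.exists_eq_add_of_le hpj.le
  obtain ⟨r, hr⟩ : ∃ r, p + q + 1 + r = Fintype.card V := ⟨_, Nat.add_sub_of_le hj⟩
  refine hτ.exists_of_perm_range (a := a) (by lia)
    (L := List.range' (p + 1) q ++ List.range' 1 p ++ List.range' (p + q + 1) r)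
    (hr ▸ perm_range_of_segment_exchange p q r) ?_
  rw [← hr]
  exact isChain_segment_exchange r hp (by lia) (by simp) (by simp) (by simp)
    fun k hk hkp hkj hkr ↦ mem_union_left _ (hkeep k (by lia) hkp hkj (by lia))

end Exchange

section ImprovingSwap

variable {α : Type*} {f : α → ℝ}

lemma notMem_of_sum_lt (hf : ∀ x, 0 ≤ f x) {s : Finset α} {a : α} (h : ∑ x ∈ s, f x < f a) :
    a ∉ s :=
  fun ha ↦ h.not_ge (single_le_sum (fun x _ ↦ hf x) ha)

variable [DecidableEq α]

lemma sum_insert_le (hf : ∀ x, 0 ≤ f x) (s : Finset α) (a : α) :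
    ∑ x ∈ insert a s, f x ≤ f a + ∑ x ∈ s, f x := by
  by_cases ha : a ∈ s
  · rw [insert_eq_of_mem ha]
    exact le_add_of_nonneg_left (hf a)
  · exact (sum_insert ha).le

lemma sum_pair_le (hf : ∀ x, 0 ≤ f x) (a b : α) : ∑ x ∈ {a, b}, f x ≤ f a + f b := by
  simpa using sum_insert_le hf {b} a

lemma sum_triple_le (hf : ∀ x, 0 ≤ f x) (a b c : α) :
    ∑ x ∈ {a, b, c}, f x ≤ f a + f b + f c := by
  linarith [sum_insert_le hf {b, c} a, sum_pair_le hf b c]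

variable {V : Type*} [Fintype V] [DecidableEq V] {w : Sym2 V → ℝ} {k : ℕ} {τ τ' : Equiv.Perm V}
  {e : Sym2 V}

/-- The tour `τ` has an improving `k`-swap with respect to the weights `w` that removes the
edge `e`. -/
def HasImprovingSwapRemoving (w : Sym2 V → ℝ) (k : ℕ) (τ : Equiv.Perm V) (e : Sym2 V) : Prop :=
  ∃ τ₂, ImprovingKSwap w k τ τ₂ ∧ e ∉ tourEdges τ₂

lemma ImprovingKSwap.mono {m : ℕ} (h : ImprovingKSwap w k τ τ') (hkm : k ≤ m) :
    ImprovingKSwap w m τ τ' :=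
  ⟨⟨h.1.1, h.1.2.trans hkm⟩, h.2⟩

lemma HasImprovingSwapRemoving.mono {m : ℕ} (h : HasImprovingSwapRemoving w k τ e) (hkm : k ≤ m) :
    HasImprovingSwapRemoving w m τ e :=
  h.imp fun _ hτ₂ ↦ ⟨hτ₂.1.mono hkm, hτ₂.2⟩

lemma HasImprovingSwapRemoving.congr (h : HasImprovingSwapRemoving w k τ' e)
    (hττ' : tourEdges τ' = tourEdges τ) : HasImprovingSwapRemoving w k τ e := by
  simpa only [HasImprovingSwapRemoving, ImprovingKSwap, IsKSwap, tourWeight, hττ'] using h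

/-- Both tours have as many edges as there are vertices, so at most `#A` edges are removed. -/
lemma IsTour.improvingKSwap_of_subset (hτ : IsTour τ) (hτ' : IsTour τ')
    (hV : 3 ≤ Fintype.card V) (hw : ∀ e, 0 ≤ w e) {D A : Finset (Sym2 V)}
    (hsub : tourEdges τ' ⊆ tourEdges τ \ D ∪ A) {r : Sym2 V} (hrτ : r ∈ tourEdges τ)
    (hrD : r ∈ D) (hcost : ∑ x ∈ A, w x < w r) : ImprovingKSwap w #A τ τ' := by
  have hnew : tourEdges τ' \ tourEdges τ ⊆ A := by grind
  have hrA : r ∉ A := notMem_of_sum_lt hw hcost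
  have hr_old : r ∈ tourEdges τ \ tourEdges τ' := by grind
  refine ⟨⟨hτ', ?_⟩, ?_⟩
  · rw [card_sdiff_comm ((hτ.card_tourEdges hV).trans (hτ'.card_tourEdges hV).symm)]
    exact card_le_card hnew
  · rw [tourWeight, tourWeight, ← sum_sdiff_lt_sum_sdiff]
    calc ∑ x ∈ tourEdges τ' \ tourEdges τ, w x
        ≤ ∑ x ∈ A, w x := sum_le_sum_of_subset_of_nonneg hnew fun x _ _ ↦ hw x
      _ < w r := hcost
      _ ≤ ∑ x ∈ tourEdges τ \ tourEdges τ', w x := single_le_sum (fun x _ ↦ hw x) hr_old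

lemma IsTour.hasImprovingSwapRemoving_of_reversal (hτ : IsTour τ) (hw : ∀ e, 0 ≤ w e) {a : V}
    {m : ℕ} (hm : 1 ≤ m) (hmn : m + 1 < Fintype.card V)
    (hcost : w s(a, (τ ^ m) a) + w s(τ a, (τ ^ (m + 1)) a) < w s(a, τ a)) :
    HasImprovingSwapRemoving w 2 τ s(a, τ a) := by
  obtain ⟨τ₂, hτ₂, hsub⟩ := hτ.exists_reversal a hm hmn
  have hfirst : s(a, τ a) = nthEdge τ a 0 := rfl
  have hsum := (sum_pair_le hw s(a, (τ ^ m) a) s(τ a, (τ ^ (m + 1)) a)).trans_lt hcost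
  have hmem := notMem_of_sum_lt hw hsum
  exact ⟨τ₂, (hτ.improvingKSwap_of_subset hτ₂ (by lia) hw hsub (mk_apply_mem_tourEdges τ a)
    (by simp [hfirst]) hsum).mono card_le_two, by grind⟩

lemma IsTour.hasImprovingSwapRemoving_of_segment_exchange (hτ : IsTour τ) (hw : ∀ e, 0 ≤ w e)
    {a : V} {p j : ℕ} (hp : 1 ≤ p) (hpj : p < j) (hj : j < Fintype.card V) {r : Sym2 V}
    (hr : r ∈ ({nthEdge τ a 0, nthEdge τ a p, nthEdge τ a j} : Finset (Sym2 V)))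
    (hadd : s(a, τ a) ∉ ({s(a, (τ ^ (p + 1)) a), s((τ ^ j) a, τ a),
      s((τ ^ p) a, (τ ^ (j + 1)) a)} : Finset (Sym2 V)))
    (hcost : w s(a, (τ ^ (p + 1)) a) + w s((τ ^ j) a, τ a) + w s((τ ^ p) a, (τ ^ (j + 1)) a)
      < w r) : HasImprovingSwapRemoving w 3 τ s(a, τ a) := by
  obtain ⟨τ₂, hτ₂, hsub⟩ := hτ.exists_segment_exchange a hp hpj hj
  have hfirst : s(a, τ a) = nthEdge τ a 0 := rfl
  have hsum := (sum_triple_le hw s(a, (τ ^ (p + 1)) a) s((τ ^ j) a, τ a)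
    s((τ ^ p) a, (τ ^ (j + 1)) a)).trans_lt hcost
  have hrτ : r ∈ tourEdges τ := by grind [nthEdge_mem_tourEdges]
  exact ⟨τ₂, (hτ.improvingKSwap_of_subset hτ₂ (by lia) hw hsub hrτ hr hsum).mono card_le_three,
    by grind⟩

end ImprovingSwap

section Degree

variable {V : Type*} [Fintype V] [DecidableEq V] {σ : Equiv.Perm V} {G : SimpleGraph V} {b d : V}

lemma IsTour.mk_mem_tourEdges_of_gdeg_eq_two (hσ : IsTour σ) (hV : 3 ≤ Fintype.card V)
    (hG : ∀ v, G.Adj v (σ v)) (hd : gdeg G d = 2) (hdb : G.Adj d b) :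
    s(d, b) ∈ tourEdges σ := by
  have hsub : {σ d, σ⁻¹ d} ⊆ G.neighborSet d := by
    rintro x (rfl | rfl)
    · exact hG d
    · simpa using (hG (σ⁻¹ d)).symm
  have hne : σ d ≠ σ⁻¹ d := fun h ↦
    hσ.apply_apply_ne hV d (Equiv.Perm.eq_inv_iff_eq.1 h)
  have hnbr := Set.eq_of_subset_of_ncard_le hsub (by rw [Set.ncard_pair hne, ← hd, gdeg])
  have hb : b ∈ ({σ d, σ⁻¹ d} : Set V) := hnbr ▸ hdb
  rcases hb with h | h
  · exact mk_mem_tourEdges.2 (.inl h.symm)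
  · exact mk_mem_tourEdges.2 (.inr (Equiv.Perm.eq_inv_iff_eq.1 h))

end Degree

namespace PLSReductionGraph

variable {V : Type*} [Fintype V] [DecidableEq V] (R : PLSReductionGraph V) {b c : V} {t : ℕ}

/-- The weights `w'` of `G_∞`. -/
noncomputable abbrev weight : Sym2 V → ℝ :=
  extendW R.G R.w R.φ R.M

lemma weight_of_adj (h : R.G.Adj b c) : R.weight s(b, c) = R.w s(b, c) := by
  simp [extendW, h]

lemma weight_of_not_adj (h : ¬ R.G.Adj b c) :
    R.weight s(b, c) = R.M * 3 ^ max (R.φ b) (R.φ c) := by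
  simp [extendW, h]

lemma weight_nonneg (e : Sym2 V) : 0 ≤ R.weight e := by
  have := R.M_pos
  rw [weight, extendW]
  split_ifs
  exacts [R.w_nonneg e, by positivity]

lemma weight_le_of_adj (h : R.G.Adj b c) : R.weight s(b, c) ≤ R.M :=
  (R.weight_of_adj h).trans_le (R.M_max _ h)

lemma le_mul_three_pow (t : ℕ) : R.M ≤ R.M * 3 ^ t :=
  le_mul_of_one_le_right R.M_pos.le (one_le_pow₀ (by norm_num))

lemma weight_le_of_le (hb : R.φ b ≤ t) (hc : R.φ c ≤ t) : R.weight s(b, c) ≤ R.M * 3 ^ t := by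
  by_cases h : R.G.Adj b c
  · exact (R.weight_le_of_adj h).trans (R.le_mul_three_pow t)
  · rw [R.weight_of_not_adj h]
    have := R.M_pos
    gcongr
    exacts [by norm_num, max_le hb hc]

lemma three_mul_weight_le_of_lt (hb : R.φ b < t) (hc : R.φ c < t) :
    3 * R.weight s(b, c) ≤ R.M * 3 ^ t := by
  obtain ⟨t, rfl⟩ := Nat.exists_eq_add_one_of_ne_zero (Nat.ne_zero_of_lt hb)
  rw [pow_succ]
  linarith [R.weight_le_of_le (Nat.le_of_lt_succ hb) (Nat.le_of_lt_succ hc)]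

lemma le_weight_of_not_adj (h : ¬ R.G.Adj b c) (ht : t ≤ R.φ b ∨ t ≤ R.φ c) :
    R.M * 3 ^ t ≤ R.weight s(b, c) := by
  rw [R.weight_of_not_adj h]
  have := R.M_pos
  gcongr
  exacts [by norm_num, le_max_iff.2 ht]

lemma exists_adj_gdeg_eq_two_of_lt (hbc : R.φ b < R.φ c) (hc : gdeg R.G c ≠ 2) :
    ∃ d, R.G.Adj b d ∧ gdeg R.G d = 2 ∧ R.φ b < R.φ d := by
  have hb : gdeg R.G b ≠ 2 := fun hb ↦ (R.deg_two_top b c hb hc).not_gt hbc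
  obtain ⟨d, hbd, hd⟩ := (R.near_deg_two b).resolve_left hb
  exact ⟨d, hbd, hd, R.deg_two_top d b hd hb⟩

end PLSReductionGraph

section Configuration

variable {V : Type*} [Fintype V] [DecidableEq V] {σ τ : Equiv.Perm V} {a v : V} {e : Sym2 V}

lemma ConsistentAt.mem_tourEdges_iff (h : ConsistentAt τ σ v) (hv : v ∈ e) :
    e ∈ tourEdges τ ↔ e ∈ tourEdges σ := by
  simpa [hv] using congrArg (e ∈ ·) h

/-- The situation of the theorem, with the tour `τ` and the tour `σ` (the paper's `τ*`) both
directed away from `a` (the paper's `ṽ`): the non-edge is `a (τ a)`, the `G`-edge missing from `τ`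
is `a (σ a)`, and its end `σ a` stands at position `p + 1` when `τ` is followed from `a`. -/
structure NonedgeConfig (R : PLSReductionGraph V) (τ σ : Equiv.Perm V) (a : V) (p : ℕ) : Prop where
  isTour_left : IsTour τ
  isTour_right : IsTour σ
  adj_apply : ∀ v, R.G.Adj v (σ v)
  not_adj : ¬ R.G.Adj a (τ a)
  one_le : 1 ≤ p
  add_two_lt : p + 2 < Fintype.card V
  pow_succ_apply : (τ ^ (p + 1)) a = σ a
  lt_of_not_consistentAt : ∀ v, v ≠ σ a → v ≠ a → ¬ ConsistentAt τ σ v → R.φ v < R.φ a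

namespace NonedgeConfig

variable {R : PLSReductionGraph V} {p q k j l m : ℕ}

lemma priority_lt (h : NonedgeConfig R τ σ a p) (hvσ : v ≠ σ a) (hva : v ≠ a) (hve : v ∈ e)
    (he : ¬ (e ∈ tourEdges τ ↔ e ∈ tourEdges σ)) : R.φ v < R.φ a :=
  h.lt_of_not_consistentAt v hvσ hva fun hv ↦ he (hv.mem_tourEdges_iff hve)

lemma priority_pow_lt_of_mem (h : NonedgeConfig R τ σ a p) (hk : 1 ≤ k)
    (hkn : k < Fintype.card V) (hkp : k ≠ p + 1) (hmem : (τ ^ k) a ∈ e)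
    (he : ¬ (e ∈ tourEdges τ ↔ e ∈ tourEdges σ)) : R.φ ((τ ^ k) a) < R.φ a := by
  refine h.priority_lt ?_ (h.isTour_left.pow_apply_ne_self hk hkn) hmem he
  rwa [← h.pow_succ_apply, Ne, h.isTour_left.pow_apply_inj hkn (by have := h.add_two_lt; lia)]

lemma priority_pow_lt (h : NonedgeConfig R τ σ a p) (hk : 1 ≤ k) (hkn : k < Fintype.card V)
    (hkp : k ≠ p + 1) (hnot : nthEdge τ a k ∉ tourEdges σ) : R.φ ((τ ^ k) a) < R.φ a :=
  h.priority_pow_lt_of_mem hk hkn hkp (Sym2.mem_mk_left _ _)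
    fun hiff ↦ hnot (hiff.1 (nthEdge_mem_tourEdges τ a k))

lemma priority_pow_succ_lt (h : NonedgeConfig R τ σ a p) (hkn : k + 1 < Fintype.card V)
    (hkp : k ≠ p) (hnot : nthEdge τ a k ∉ tourEdges σ) : R.φ ((τ ^ (k + 1)) a) < R.φ a :=
  h.priority_pow_lt_of_mem (by lia) hkn (by lia) (Sym2.mem_mk_right _ _)
    fun hiff ↦ hnot (hiff.1 (nthEdge_mem_tourEdges τ a k))

lemma adj_of_mem (h : NonedgeConfig R τ σ a p) {b c : V} (hbc : s(b, c) ∈ tourEdges σ) :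
    R.G.Adj b c := by
  rcases mk_mem_tourEdges.1 hbc with rfl | rfl
  exacts [h.adj_apply b, (h.adj_apply c).symm]

lemma priority_apply_lt (h : NonedgeConfig R τ σ a p) : R.φ (τ a) < R.φ a :=
  h.priority_pow_succ_lt (k := 0) (by have := h.add_two_lt; lia) (by have := h.one_le; lia)
    fun hmem ↦ h.not_adj (h.adj_of_mem hmem)

lemma mul_pow_le_weight (h : NonedgeConfig R τ σ a p) :
    R.M * 3 ^ R.φ a ≤ R.weight s(a, τ a) :=
  R.le_weight_of_not_adj h.not_adj (.inl le_rfl)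

/-- Note that `φ a ≥ 2`, because `φ (τ a) < φ a`. -/
lemma three_mul_weight_lt_of_adj (h : NonedgeConfig R τ σ a p) {b c : V} (hbc : R.G.Adj b c) :
    3 * R.weight s(b, c) < R.M * 3 ^ R.φ a := by
  have hpos := R.φ_pos (τ a)
  have hlt := h.priority_apply_lt
  calc 3 * R.weight s(b, c) ≤ R.M * 3 ^ 1 := by linarith [R.weight_le_of_adj hbc]
    _ < R.M * 3 ^ R.φ a := by
      have := R.M_pos
      gcongr
      exacts [by norm_num, by lia]

lemma hasImprovingSwap_of_reversal (h : NonedgeConfig R τ σ a p) (hm : 1 ≤ m)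
    (hmn : m + 1 < Fintype.card V) (hadj : R.G.Adj a ((τ ^ m) a))
    (hlow : R.φ ((τ ^ (m + 1)) a) < R.φ a) :
    HasImprovingSwapRemoving R.weight 3 τ s(a, τ a) := by
  refine (h.isTour_left.hasImprovingSwapRemoving_of_reversal R.weight_nonneg hm hmn ?_).mono
    (by lia)
  linarith [h.mul_pow_le_weight, h.three_mul_weight_lt_of_adj hadj, R.weight_nonneg s(a, τ a),
    R.three_mul_weight_le_of_lt h.priority_apply_lt hlow]

lemma hasImprovingSwap_of_segment_exchange (h : NonedgeConfig R τ σ a p) (hk : 1 ≤ k) (hkj : k < j)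
    (hj : j < Fintype.card V) (hadj : R.G.Adj a ((τ ^ (k + 1)) a))
    (hlow : R.φ ((τ ^ j) a) < R.φ a)
    (hcheap : 3 * R.weight s((τ ^ k) a, (τ ^ (j + 1)) a) ≤ R.M * 3 ^ R.φ a) :
    HasImprovingSwapRemoving R.weight 3 τ s(a, τ a) := by
  have hcost : R.weight s(a, (τ ^ (k + 1)) a) + R.weight s((τ ^ j) a, τ a) +
      R.weight s((τ ^ k) a, (τ ^ (j + 1)) a) < R.weight s(a, τ a) := by
    linarith [h.mul_pow_le_weight, h.three_mul_weight_lt_of_adj hadj,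
      R.three_mul_weight_le_of_lt hlow h.priority_apply_lt]
  exact h.isTour_left.hasImprovingSwapRemoving_of_segment_exchange R.weight_nonneg hk hkj hj
    (mem_insert_self _ _)
    (notMem_of_sum_lt R.weight_nonneg ((sum_triple_le R.weight_nonneg _ _ _).trans_lt hcost)) hcost

lemma adj_pow_succ (h : NonedgeConfig R τ σ a p) : R.G.Adj a ((τ ^ (p + 1)) a) :=
  h.pow_succ_apply ▸ h.adj_apply a

lemma hasImprovingSwap_of_notMem_next (h : NonedgeConfig R τ σ a p)
    (hnext : nthEdge τ a (p + 1) ∉ tourEdges σ) :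
    HasImprovingSwapRemoving R.weight 3 τ s(a, τ a) :=
  h.hasImprovingSwap_of_reversal (by lia) h.add_two_lt h.adj_pow_succ
    (h.priority_pow_succ_lt h.add_two_lt (by lia) hnext)

lemma notMem_prev (h : NonedgeConfig R τ σ a p) (hnext : nthEdge τ a (p + 1) ∈ tourEdges σ) :
    nthEdge τ a p ∉ tourEdges σ :=
  h.isTour_left.nthEdge_notMem_of_chord h.one_le h.add_two_lt
    (h.pow_succ_apply ▸ mk_apply_mem_tourEdges σ a) hnext

lemma hasImprovingSwap_of_notMem_between (h : NonedgeConfig R τ σ a p)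
    (hprev : nthEdge τ a p ∉ tourEdges σ) (hpk : p + 1 < k) (hkn : k + 1 < Fintype.card V)
    (hk : nthEdge τ a k ∉ tourEdges σ) :
    HasImprovingSwapRemoving R.weight 3 τ s(a, τ a) := by
  have hp_low := h.priority_pow_lt h.one_le (by lia) (by lia) hprev
  exact h.hasImprovingSwap_of_segment_exchange h.one_le (by lia) (by lia) h.adj_pow_succ
    (h.priority_pow_lt (by lia) (by lia) (by lia) hk)
    (R.three_mul_weight_le_of_lt hp_low (h.priority_pow_succ_lt hkn (by lia) hk))

lemma notMem_last (h : NonedgeConfig R τ σ a p) (hl : l + 1 = Fintype.card V)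
    (hbetween : ∀ k, p + 1 ≤ k → k < l → nthEdge τ a k ∈ tourEdges σ) :
    nthEdge τ a l ∉ tourEdges σ := by
  obtain ⟨k, hpk, hkn, hk⟩ := h.isTour_left.exists_nthEdge_notMem_of_chord h.isTour_right
    (by have := h.one_le; lia) h.add_two_lt h.pow_succ_apply.symm
  have hlk : l ≤ k := not_lt.1 fun hkl ↦ hk (hbetween k hpk hkl)
  rwa [show l = k by lia]

lemma exists_apply_pow_succ_eq (h : NonedgeConfig R τ σ a p) (hl : l + 1 = Fintype.card V)
    (hlast : nthEdge τ a l ∉ tourEdges σ) :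
    ∃ q, 1 ≤ q ∧ q + 2 < Fintype.card V ∧ q ≠ p ∧ σ ((τ ^ (q + 1)) a) = a ∧
      R.φ ((τ ^ (q + 1)) a) < R.φ a := by
  obtain ⟨b, hb⟩ := σ.surjective a
  have hba : b ≠ a := by rintro rfl; exact h.isTour_right.apply_ne b hb
  have hbσ : b ≠ σ a := by
    rintro rfl
    exact h.isTour_right.apply_apply_ne (by have := h.add_two_lt; lia) a hb
  have hab_mem : s(a, b) ∈ tourEdges σ := mk_mem_tourEdges.2 (.inr hb)
  have hab : s(a, b) ∉ tourEdges τ := fun hmem ↦ by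
    rcases mk_mem_tourEdges.1 hmem with rfl | hτb
    · exact h.not_adj (h.adj_of_mem hab_mem)
    · have hbl : b = (τ ^ l) a := τ.injective <| by
        rw [hτb, ← Equiv.Perm.mul_apply, ← pow_succ', hl, h.isTour_left.pow_card_apply]
      rw [h.isTour_left.nthEdge_last hl, ← hbl, Sym2.eq_swap] at hlast
      exact hlast hab_mem
  obtain ⟨q, hq, hqn, rfl⟩ := h.isTour_left.exists_pow_succ_apply_eq_of_notMem hba hab
  refine ⟨q, hq, hqn, ?_, hb, h.priority_lt hbσ hba (Sym2.mem_mk_right _ _)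
    fun hiff ↦ hab (hiff.2 hab_mem)⟩
  rintro rfl
  exact hbσ h.pow_succ_apply

lemma hasImprovingSwap_of_notMem_next_inv (h : NonedgeConfig R τ σ a p)
    (hprev : nthEdge τ a p ∉ tourEdges σ) (hl : l + 1 = Fintype.card V)
    (hlast : nthEdge τ a l ∉ tourEdges σ) (hqn : q + 2 < Fintype.card V)
    (hq : σ ((τ ^ (q + 1)) a) = a) (hnext : nthEdge τ a (q + 1) ∉ tourEdges σ) :
    HasImprovingSwapRemoving R.weight 3 τ s(a, τ a) := by
  have hadj : R.G.Adj a ((τ ^ (q + 1)) a) := h.adj_of_mem (mk_mem_tourEdges.2 (.inr hq))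
  obtain rfl | hqp := eq_or_ne (q + 1) p
  · have hadd := h.add_two_lt
    refine h.hasImprovingSwap_of_segment_exchange h.one_le (j := l) (by lia) (by lia) h.adj_pow_succ
      (h.priority_pow_lt (by lia) (by lia) (by lia) hlast) ?_
    rw [hl, h.isTour_left.pow_card_apply]
    exact (h.three_mul_weight_lt_of_adj hadj.symm).le
  · exact h.hasImprovingSwap_of_reversal (by lia) hqn hadj
      (h.priority_pow_succ_lt hqn hqp hnext)

lemma hasImprovingSwap_of_priority_lt (h : NonedgeConfig R τ σ a p)
    (hprev : nthEdge τ a p ∉ tourEdges σ) (hq : 1 ≤ q) (hqp : q < p)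
    (hadj : R.G.Adj a ((τ ^ (q + 1)) a)) (hq_prev : nthEdge τ a q ∉ tourEdges σ)
    (hlt : R.φ (σ a) < R.φ a) :
    HasImprovingSwapRemoving R.weight 3 τ s(a, τ a) := by
  have hadd := h.add_two_lt
  refine h.hasImprovingSwap_of_segment_exchange hq hqp (by lia) hadj
    (h.priority_pow_lt h.one_le (by lia) (by lia) hprev) (R.three_mul_weight_le_of_lt ?_ ?_)
  · exact h.priority_pow_lt hq (by lia) (by lia) hq_prev
  · rwa [h.pow_succ_apply]

/-- If the two vertices were adjacent, then `σ a` would not have degree two, so `φ a < φ (σ a)`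
would give `a` a neighbour `d` of degree two with `φ a < φ d`. Since `σ` uses the edge `a d`, this
`d` would be the low-priority vertex `σ⁻¹ a`. -/
lemma not_adj_prev (h : NonedgeConfig R τ σ a p) (hprev : nthEdge τ a p ∉ tourEdges σ)
    (hlt : R.φ a < R.φ (σ a)) (hinv : R.φ (σ⁻¹ a) < R.φ a) : ¬ R.G.Adj ((τ ^ p) a) (σ a) := by
  intro hadj
  have hV : 3 ≤ Fintype.card V := by have := h.add_two_lt; lia
  have hdeg : gdeg R.G (σ a) ≠ 2 := fun hdeg ↦ hprev <| by
    rw [nthEdge, h.pow_succ_apply, Sym2.eq_swap]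
    exact h.isTour_right.mk_mem_tourEdges_of_gdeg_eq_two hV h.adj_apply hdeg hadj.symm
  obtain ⟨d, had, hd, hφd⟩ := R.exists_adj_gdeg_eq_two_of_lt hlt hdeg
  rcases mk_mem_tourEdges.1
    (h.isTour_right.mk_mem_tourEdges_of_gdeg_eq_two hV h.adj_apply hd had.symm) with hσd | rfl
  · exact hinv.not_gt (Equiv.Perm.eq_inv_iff_eq.2 hσd ▸ hφd)
  · exact hdeg hd

lemma hasImprovingSwap_of_lt_priority (h : NonedgeConfig R τ σ a p) (hp : 2 ≤ p)
    (hprev : nthEdge τ a p ∉ tourEdges σ) (hl : l + 1 = Fintype.card V)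
    (hlast : nthEdge τ a l ∉ tourEdges σ) (hlt : R.φ a < R.φ (σ a))
    (hinv : R.φ (σ⁻¹ a) < R.φ a) :
    HasImprovingSwapRemoving R.weight 3 τ s(a, τ a) := by
  have hadd := h.add_two_lt
  have hp_low := h.priority_pow_lt h.one_le (by lia) (by lia) hprev
  have hl_low := h.priority_pow_lt (k := l) (by lia) (by lia) (by lia) hlast
  have hremoved : R.M * 3 ^ (R.φ a + 1) ≤ R.weight (nthEdge τ a p) := by
    rw [nthEdge, h.pow_succ_apply]
    exact R.le_weight_of_not_adj (h.not_adj_prev hprev hlt hinv) (.inr hlt)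
  have hclose : R.weight s((τ ^ p) a, a) ≤ R.M * 3 ^ R.φ a := R.weight_le_of_le hp_low.le le_rfl
  have hne {k m : ℕ} (hk : k < Fintype.card V) (hm : m < Fintype.card V) (hkm : k ≠ m) :
      (τ ^ k) a ≠ (τ ^ m) a := (h.isTour_left.pow_apply_inj hk hm).not.2 hkm
  refine h.isTour_left.hasImprovingSwapRemoving_of_segment_exchange R.weight_nonneg h.one_le
    (show p < l by lia) (by lia) (r := nthEdge τ a p) (by simp) ?_ ?_
  · have hp_first : (τ ^ p) a ≠ τ a := hne (m := 1) (by lia) (by lia) (by lia)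
    have hp_succ : (τ ^ (p + 1)) a ≠ τ a := hne (m := 1) (by lia) (by lia) (by lia)
    have hl_zero : (τ ^ l) a ≠ a := hne (m := 0) (by lia) (by lia) (by lia)
    rw [hl, h.isTour_left.pow_card_apply]
    grind
  · rw [hl, h.isTour_left.pow_card_apply]
    rw [pow_succ] at hremoved
    linarith [R.M_pos, h.three_mul_weight_lt_of_adj h.adj_pow_succ, R.le_mul_three_pow (R.φ a),
      R.three_mul_weight_le_of_lt hl_low h.priority_apply_lt]

theorem hasImprovingSwap (h : NonedgeConfig R τ σ a p) :
    HasImprovingSwapRemoving R.weight 3 τ s(a, τ a) := by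
  obtain ⟨l, hl⟩ : ∃ l, l + 1 = Fintype.card V :=
    ⟨Fintype.card V - 1, Nat.sub_add_cancel (by have := h.add_two_lt; lia)⟩
  by_contra hswap
  have hnext : nthEdge τ a (p + 1) ∈ tourEdges σ := by_contra fun hnext ↦
    hswap (h.hasImprovingSwap_of_notMem_next hnext)
  have hprev := h.notMem_prev hnext
  have hbetween (k : ℕ) (hpk : p + 1 ≤ k) (hkl : k < l) : nthEdge τ a k ∈ tourEdges σ := by
    obtain rfl | hpk := hpk.eq_or_lt
    · exact hnext
    · exact by_contra fun hk ↦
        hswap (h.hasImprovingSwap_of_notMem_between hprev hpk (by lia) hk)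
  have hlast := h.notMem_last hl hbetween
  obtain ⟨q, hq, hqn, hqp, hσq, hq_low⟩ := h.exists_apply_pow_succ_eq hl hlast
  have hσq_mem : s(a, (τ ^ (q + 1)) a) ∈ tourEdges σ := mk_mem_tourEdges.2 (.inr hσq)
  have hq_next : nthEdge τ a (q + 1) ∈ tourEdges σ := by_contra fun hq_next ↦
    hswap (h.hasImprovingSwap_of_notMem_next_inv hprev hl hlast hqn hσq hq_next)
  have hq_prev := h.isTour_left.nthEdge_notMem_of_chord hq hqn hσq_mem hq_next
  have hqp : q < p := hqp.lt_of_le <| not_lt.1 fun hpq ↦ hq_prev (hbetween q hpq (by lia))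
  rcases lt_or_gt_of_ne (R.φ_inj.ne (h.isTour_right.apply_ne a)) with hlt | hlt
  · exact hswap (h.hasImprovingSwap_of_priority_lt hprev hq hqp (h.adj_of_mem hσq_mem) hq_prev hlt)
  · refine hswap (h.hasImprovingSwap_of_lt_priority (by lia) hprev hl hlast hlt ?_)
    rwa [Equiv.Perm.inv_eq_iff_eq.2 hσq.symm]

end NonedgeConfig

end Configuration

theorem improving_three_swap_removing_nonedge
    {V : Type*} [Fintype V] [DecidableEq V] (R : PLSReductionGraph V)
    (τ τs : Equiv.Perm V) (hτ : IsTour τ) (hτs : IsTour τs)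
    (hτsG : ∀ e ∈ tourEdges τs, e ∈ R.G.edgeSet)
    (vt v' u : V)
    (hvv' : s(vt, v') ∈ tourEdges τ) (hnonedge : s(vt, v') ∉ R.G.edgeSet)
    (huG : s(u, vt) ∈ R.G.edgeSet)
    (hus : s(u, vt) ∈ tourEdges τs) (hut : s(u, vt) ∉ tourEdges τ)
    (hcons : ∀ v'' : V, v'' ≠ u → v'' ≠ vt → ¬ ConsistentAt τ τs v'' →
      R.φ v'' < R.φ vt) :
    ∃ τ₂, ImprovingKSwap (extendW R.G R.w R.φ R.M) 3 τ τ₂ ∧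
      s(vt, v') ∉ tourEdges τ₂ := by
  obtain ⟨τ₀, hτ₀, hτ₀_edges, rfl⟩ := hτ.exists_apply_eq_of_mem_tourEdges hvv'
  obtain ⟨σ, hσ, hσ_edges, rfl⟩ := hτs.exists_apply_eq_of_mem_tourEdges (Sym2.eq_swap ▸ hus)
  rw [Sym2.eq_swap, ← hτ₀_edges] at hut
  obtain ⟨p, hp, hpn, hpσ⟩ := hτ₀.exists_pow_succ_apply_eq_of_notMem (hσ.apply_ne vt) hut
  have hconfig : NonedgeConfig R τ₀ σ vt p :=
    { isTour_left := hτ₀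
      isTour_right := hσ
      adj_apply := fun v ↦ hτsG _ (hσ_edges ▸ mk_apply_mem_tourEdges σ v)
      not_adj := hnonedge
      one_le := hp
      add_two_lt := hpn
      pow_succ_apply := hpσ
      lt_of_not_consistentAt := by simpa only [ConsistentAt, hτ₀_edges, hσ_edges] using hcons }
  exact hconfig.hasImprovingSwap.congr hτ₀_edges
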